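/- Let n ≥ 1, let 𝒯 and 𝒯' be any two tree sequences of order n, and let k ∈ ℤ^n. Then L_n(𝒯,k) = L_n(𝒯',k); that is, the signed enumeration of Gelfand-Tsetlin tree sequences does not depend on the underlying tree sequence. -/

import Mathlib

/-- The simple graph underlying a directed edge labeling. -/
def treeRel {n : ℕ} (e : Fin (n - 1) → Fin n × Fin n) : SimpleGraph (Fin n) :=
  SimpleGraph.fromRel (fun p q => ∃ j, e j = (p, q))

/-- An `n`-tree: a directed tree whose `n` vertices are identified with `1, …, n`
(here `Fin n`) and whose `n - 1` edges are identified with `1', …, (n-1)'`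
(here `Fin (n-1)`); `edge j = (p, q)` means the edge `j'` is directed from `p` to `q`. -/
structure NTree (n : ℕ) where
  edge : Fin (n - 1) → Fin n × Fin n
  loopless : ∀ j, (edge j).1 ≠ (edge j).2
  edgeInj : ∀ j j' : Fin (n - 1),
    (edge j = edge j' ∨ edge j = ((edge j').2, (edge j').1)) → j = j'
  conn : (treeRel edge).Connected

/-- The head of the edge `j'` with respect to the standard orientation away from
the root `r`: the endpoint farther from `r`. -/
noncomputable def stdHead {n : ℕ} (T : NTree n) (r : Fin n) (j : Fin (n - 1)) : Fin n :=
  if (treeRel T.edge).dist r (T.edge j).1 < (treeRel T.edge).dist r (T.edge j).2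
    then (T.edge j).2 else (T.edge j).1

/-- The permutation `π` of the vertices: first the root, then the standard heads of the
edges `1', 2', …, (n-1)'` in this order. -/
noncomputable def permFun {n : ℕ} (T : NTree n) (r : Fin n) : Fin n → Fin n :=
  fun m => if h : m.1 = 0 then r else stdHead T r ⟨m.1 - 1, by have := m.isLt; omega⟩

/-- The sign of an `n`-tree with respect to a root `r`:
`(-1) ^ (number of reversed edges) * sgn π`. -/
noncomputable def treeSignAt {n : ℕ} (T : NTree n) (r : Fin n) : ℤ :=
  (-1) ^ (Finset.univ.filter
      (fun j : Fin (n - 1) => stdHead T r j ≠ (T.edge j).2)).card *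
    (if h : Function.Bijective (permFun T r) then
      ((Equiv.Perm.sign (Equiv.ofBijective (permFun T r) h) : ℤˣ) : ℤ) else 1)

/-- The sign of an `n`-tree (independent of the root; we use the vertex `1`). -/
noncomputable def treeSign {n : ℕ} (T : NTree n) : ℤ :=
  if h : 0 < n then treeSignAt T ⟨0, h⟩ else 1

/-- `l` is admissible for `(T, k)`: for each edge `j' = (p, q)`,
if `k p + p < k q + q` then `k p + p ≤ l j + j < k q + q`, and otherwise
`k q + q ≤ l j + j < k p + p` (all indices are 1-based in the paper, so a vertex
`p : Fin n` carries the label `k p + (p + 1)` and an edge `j : Fin (n-1)` the label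
`l j + (j + 1)`). -/
def Admissible {n : ℕ} (T : NTree n) (k : Fin n → ℤ) (l : Fin (n - 1) → ℤ) : Prop :=
  ∀ j : Fin (n - 1),
    if k (T.edge j).1 + ((T.edge j).1.1 : ℤ) + 1 < k (T.edge j).2 + ((T.edge j).2.1 : ℤ) + 1
    then k (T.edge j).1 + ((T.edge j).1.1 : ℤ) + 1 ≤ l j + (j.1 : ℤ) + 1 ∧
         l j + (j.1 : ℤ) + 1 < k (T.edge j).2 + ((T.edge j).2.1 : ℤ) + 1
    else k (T.edge j).2 + ((T.edge j).2.1 : ℤ) + 1 ≤ l j + (j.1 : ℤ) + 1 ∧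
         l j + (j.1 : ℤ) + 1 < k (T.edge j).1 + ((T.edge j).1.1 : ℤ) + 1

/-- The number of inversions of the pair `(T, k)`: edges `j' = (p, q)` with
`¬ (k p + p < k q + q)`. -/
def invCount {n : ℕ} (T : NTree n) (k : Fin n → ℤ) : ℕ :=
  (Finset.univ.filter (fun j : Fin (n - 1) =>
    ¬ (k (T.edge j).1 + ((T.edge j).1.1 : ℤ) + 1 <
        k (T.edge j).2 + ((T.edge j).2.1 : ℤ) + 1))).card

/-- A tree sequence of order `n`: `T_1, …, T_n` where `T_i` is an `i`-tree. -/
def TreeSeq (n : ℕ) := ∀ i : Fin n, NTree (i.1 + 1)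

/-- A Gelfand-Tsetlin tree sequence associated with `𝒯` and `k`: a sequence of
labelings `L i : Fin (i+1) → ℤ` with top labeling `k` and such that each `L (i-1)`
is admissible for `(T_{i+1}, L i)`. -/
def IsGTTreeSeq {n : ℕ} (𝒯 : TreeSeq n) (k : Fin n → ℤ)
    (L : ∀ i : Fin n, Fin (i.1 + 1) → ℤ) : Prop :=
  (∀ i : Fin n, i.1 + 1 = n → ∀ j : Fin (i.1 + 1),
      L i j = k ⟨j.1, by have := j.isLt; omega⟩) ∧
  ∀ i : Fin n, ∀ hi : 0 < i.1,
    Admissible (𝒯 i) (L i)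
      (fun j => L ⟨i.1 - 1, by have := i.isLt; omega⟩
        ⟨j.1, by have := j.isLt; show j.1 < i.1 - 1 + 1; omega⟩)

/-- The sign of a Gelfand-Tsetlin tree sequence:
`(-1) ^ (number of inversions) * sgn 𝒯`. -/
noncomputable def gtSign {n : ℕ} (𝒯 : TreeSeq n)
    (L : ∀ i : Fin n, Fin (i.1 + 1) → ℤ) : ℤ :=
  (-1) ^ (∑ i : Fin n, invCount (𝒯 i) (L i)) * ∏ i : Fin n, treeSign (𝒯 i)

/-- `L_n(𝒯, k)`: the signed enumeration of all Gelfand-Tsetlin tree sequences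
associated with `𝒯` and `k`. -/
noncomputable def Lsum {n : ℕ} (𝒯 : TreeSeq n) (k : Fin n → ℤ) : ℤ :=
  ∑ᶠ L ∈ {L : ∀ i : Fin n, Fin (i.1 + 1) → ℤ | IsGTTreeSeq 𝒯 k L}, gtSign 𝒯 L

open Finset in
theorem det_of_rank {m : Type*} [Fintype m] [DecidableEq m] (M : Matrix m m ℤ) (f : m → ℕ)
    (h : ∀ v c, M v c ≠ 0 → v = c ∨ f c < f v) : M.det = ∏ v, M v v := by
  rw [Matrix.det_apply', Finset.sum_eq_single 1]
  · simp
  · intro σ _ hσ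
    by_contra hne
    have h1 : ∀ i, M (σ i) i ≠ 0 := by
      intro i hi
      apply hne
      rw [Finset.prod_eq_zero (f := fun i => M (σ i) i) (Finset.mem_univ i) hi, mul_zero]
    apply hσ
    ext i
    by_contra hi
    have hlt : ∑ i, f i < ∑ i, f (σ i) := by
      apply Finset.sum_lt_sum
      · intro j _
        rcases h _ _ (h1 j) with h2 | h2
        · rw [h2]
        · exact h2.le
      · refine ⟨i, Finset.mem_univ _, ?_⟩
        rcases h _ _ (h1 i) with h2 | h2
        · exact absurd h2 hi
        · exact h2
    rw [Equiv.sum_comp σ f] at hlt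
    exact lt_irrefl _ hlt
  · simp

/-- extended incidence matrix -/
def incMat {n : ℕ} (T : NTree (n+1)) : Matrix (Fin (n+1)) (Fin (n+1)) ℤ :=
  fun m c => Fin.cases (motive := fun _ => ℤ) (if c = 0 then 1 else 0)
    (fun j : Fin n => (if c = (T.edge j).2 then 1 else 0) - (if c = (T.edge j).1 then 1 else 0)) m

theorem exists_parent {n : ℕ} (T : NTree (n+1)) (v : Fin (n+1)) (hv : v ≠ 0) :
    ∃ j : Fin n, stdHead T 0 j = v ∧
      (((T.edge j).2 = v ∧
        (treeRel T.edge).dist 0 (T.edge j).1 < (treeRel T.edge).dist 0 v) ∨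
       ((T.edge j).1 = v ∧
        (treeRel T.edge).dist 0 (T.edge j).2 < (treeRel T.edge).dist 0 v)) := by
  obtain ⟨w, hw⟩ := T.conn.exists_walk_length_eq_dist v 0
  cases w with
  | nil => exact absurd rfl hv
  | @cons _ u _ hadj p =>
    have h1 : (treeRel T.edge).dist u 0 ≤ p.length := SimpleGraph.dist_le p
    have hlt : (treeRel T.edge).dist 0 u < (treeRel T.edge).dist 0 v := by
      rw [SimpleGraph.dist_comm (v := u), SimpleGraph.dist_comm (v := v)]
      simp only [SimpleGraph.Walk.length_cons] at hw
      omega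
    unfold treeRel at hadj
    rw [SimpleGraph.fromRel_adj] at hadj
    rcases hadj.2 with ⟨j, hj⟩ | ⟨j, hj⟩
    · refine ⟨j, ?_, Or.inr ?_⟩
      · unfold stdHead
        rw [hj, if_neg (by simpa using hlt.le)]
      · rw [hj]; exact ⟨rfl, hlt⟩
    · refine ⟨j, ?_, Or.inl ?_⟩
      · unfold stdHead
        rw [hj, if_pos (by simpa using hlt)]
      · rw [hj]; exact ⟨rfl, hlt⟩

theorem permFun_zero {n : ℕ} (T : NTree (n+1)) : permFun T 0 0 = 0 := by
  simp [permFun]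

theorem permFun_succ {n : ℕ} (T : NTree (n+1)) (j : Fin n) :
    permFun T 0 j.succ = stdHead T 0 j := by
  simp [permFun]

theorem permFun_bij {n : ℕ} (T : NTree (n+1)) : Function.Bijective (permFun T 0) := by
  rw [← Finite.surjective_iff_bijective]
  intro v
  by_cases hv : v = 0
  · exact ⟨0, by rw [permFun_zero, hv]⟩
  · obtain ⟨j, hj, _⟩ := exists_parent T v hv
    exact ⟨j.succ, by rw [permFun_succ, hj]⟩

theorem edge_dist {n : ℕ} (T : NTree (n+1)) (j : Fin n) :
      (((T.edge j).2 = stdHead T 0 j ∧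
        (treeRel T.edge).dist 0 (T.edge j).1 < (treeRel T.edge).dist 0 (stdHead T 0 j)) ∨
       ((T.edge j).1 = stdHead T 0 j ∧
        (treeRel T.edge).dist 0 (T.edge j).2 < (treeRel T.edge).dist 0 (stdHead T 0 j))) := by
  have hv : stdHead T 0 j ≠ 0 := by
    intro h
    rw [← permFun_succ] at h
    have := (permFun_bij T).1 (h.trans (permFun_zero T).symm)
    exact absurd this (Fin.succ_ne_zero j)
  obtain ⟨i, hi, h⟩ := exists_parent T _ hv
  have : i = j := by
    rw [← permFun_succ, ← permFun_succ] at hi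
    exact Fin.succ_injective _ ((permFun_bij T).1 hi)
  rw [this] at h
  exact h

theorem incMat_zero {n : ℕ} (T : NTree (n+1)) (c : Fin (n+1)) :
    incMat T 0 c = if c = 0 then 1 else 0 := rfl

theorem incMat_succ {n : ℕ} (T : NTree (n+1)) (j : Fin n) (c : Fin (n+1)) :
    incMat T j.succ c = (if c = (T.edge j).2 then 1 else 0) - (if c = (T.edge j).1 then 1 else 0) :=
  rfl

theorem incMat_det {n : ℕ} (T : NTree (n+1)) : (incMat T).det = treeSign T := by
  have hb := permFun_bij T
  set π := Equiv.ofBijective (permFun T 0) hb with hπ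
  have hπ0 : π 0 = 0 := permFun_zero T
  have hπs : ∀ j : Fin n, π j.succ = stdHead T 0 j := permFun_succ T
  have h1 : ((incMat T).submatrix π.symm id).det = ∏ m, incMat T m (π m) := by
    rw [det_of_rank _ (fun v => (treeRel T.edge).dist 0 v)]
    · rw [← Equiv.prod_comp π]
      simp
    · intro v c hvc
      obtain ⟨m, rfl⟩ := π.surjective v
      simp only [Matrix.submatrix_apply, Equiv.symm_apply_apply, id] at hvc
      induction m using Fin.cases with
      | zero =>
        rw [incMat_zero] at hvc
        left
        rw [hπ0]
        by_contra h
        exact hvc (if_neg (Ne.symm h))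
      | succ j =>
        rw [incMat_succ] at hvc
        rw [hπs]
        rcases edge_dist T j with ⟨h2, h3⟩ | ⟨h2, h3⟩
        · by_cases hc : c = (T.edge j).2
          · left; rw [hc, h2]
          · by_cases hc' : c = (T.edge j).1
            · right; rw [hc']; exact h3
            · simp [hc, hc'] at hvc
        · by_cases hc : c = (T.edge j).1
          · left; rw [hc, h2]
          · by_cases hc' : c = (T.edge j).2
            · right; rw [hc']; exact h3
            · simp [hc, hc'] at hvc
  have h2 : ∏ m, incMat T m (π m) = (-1) ^ (Finset.univ.filter
      (fun j : Fin n => stdHead T 0 j ≠ (T.edge j).2)).card := by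
    rw [Fin.prod_univ_succ, hπ0, incMat_zero, if_pos rfl, one_mul, Finset.card_filter,
      ← Finset.prod_pow_eq_pow_sum]
    apply Finset.prod_congr rfl
    intro j _
    rw [hπs, incMat_succ]
    have hl := T.loopless j
    rcases edge_dist T j with ⟨h2, h3⟩ | ⟨h2, h3⟩
    · rw [← h2]; simp [Ne.symm hl]
    · rw [← h2]; simp [hl]
  have h3 := Matrix.det_permute π.symm (incMat T)
  rw [h1, h2] at h3
  unfold treeSign treeSignAt
  rw [dif_pos (Nat.succ_pos n)]
  change _ = (-1) ^ (Finset.univ.filter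
      (fun j : Fin n => stdHead T 0 j ≠ (T.edge j).2)).card * (if h : Function.Bijective (permFun T 0) then
      ((Equiv.Perm.sign (Equiv.ofBijective (permFun T 0) h) : ℤˣ) : ℤ) else 1)
  rw [dif_pos hb, h3, ← hπ, Equiv.Perm.sign_symm]
  have : ((Equiv.Perm.sign π : ℤˣ) : ℤ) * ((Equiv.Perm.sign π : ℤˣ) : ℤ) = 1 := by
    rw [← Units.val_mul, Int.units_mul_self]; rfl
  linear_combination (-(incMat T).det) * this

theorem treeSign_sq {n : ℕ} (T : NTree (n+1)) : treeSign T * treeSign T = 1 := by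
  unfold treeSign treeSignAt
  rw [dif_pos (Nat.succ_pos n), mul_mul_mul_comm, ← mul_pow]
  split_ifs
  · rw [← Units.val_mul, Int.units_mul_self]; simp
  · simp

/-- binomial Vandermonde determinant -/
noncomputable def bdet {n : ℕ} (x : Fin n → ℤ) : ℤ :=
  Matrix.det (Matrix.of fun i j : Fin n => Ring.choose (x i) j.1)

theorem sum_choose (a b c : ℤ) (h : a ≤ b) (m : ℕ) :
    ∑ l ∈ Finset.Ico (a - c) (b - c), Ring.choose (l + c) m =
      Ring.choose b (m+1) - Ring.choose a (m+1) := by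
  induction b, h using Int.le_induction with
  | base => simp
  | succ b hb ih =>
    have : Finset.Ico (a - c) (b + 1 - c) = insert (b - c) (Finset.Ico (a-c) (b-c)) := by
      ext t; simp only [Finset.mem_insert, Finset.mem_Ico]; omega
    rw [this, Finset.sum_insert (by simp), ih, Ring.choose_succ_succ]
    ring_nf

theorem bdet_tree {n : ℕ} (T : NTree (n+1)) (x : Fin (n+1) → ℤ) :
    Matrix.det (Matrix.of fun i j : Fin n => Ring.choose (x (T.edge i).2) (j.1 + 1) -
      Ring.choose (x (T.edge i).1) (j.1 + 1)) = treeSign T * bdet x := by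
  rw [← incMat_det, bdet, ← Matrix.det_mul, Matrix.det_succ_column_zero, Fin.sum_univ_succ,
    Finset.sum_eq_zero]
  · have : ∀ j, (incMat T * Matrix.of fun i j : Fin (n+1) => Ring.choose (x i) j.1) 0 j =
        Ring.choose (x 0) j.1 := by
      intro j
      simp [Matrix.mul_apply, incMat_zero]
    rw [this]
    simp only [Fin.val_zero, pow_zero, Ring.choose_zero_right, one_mul, add_zero]
    congr 1
    ext i j
    simp [Matrix.mul_apply, incMat_succ, sub_mul, Finset.sum_sub_distrib]
  · intro i _
    have : (incMat T * Matrix.of fun i j : Fin (n+1) => Ring.choose (x i) j.1) i.succ 0 = 0 := by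
      simp [Matrix.mul_apply, incMat_succ, Finset.sum_sub_distrib]
    rw [this]; simp

/-- shifted labels -/
def sh {n : ℕ} (k : Fin n → ℤ) : Fin n → ℤ := fun p => k p + (p.1 : ℤ) + 1

/-- lower and upper bounds -/
noncomputable def admSet {n : ℕ} (T : NTree (n+1)) (k : Fin (n+1) → ℤ) : Finset (Fin n → ℤ) :=
  Fintype.piFinset fun j : Fin n => Finset.Ico
    (min (sh k (T.edge j).1) (sh k (T.edge j).2) - ((j.1 : ℤ) + 1))
    (max (sh k (T.edge j).1) (sh k (T.edge j).2) - ((j.1 : ℤ) + 1))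

theorem mem_admSet {n : ℕ} (T : NTree (n+1)) (k : Fin (n+1) → ℤ) (l : Fin n → ℤ) :
    l ∈ admSet T k ↔ Admissible T k l := by
  unfold admSet Admissible
  rw [Fintype.mem_piFinset]
  apply forall_congr'
  intro j
  rw [Finset.mem_Ico]
  unfold sh
  split_ifs with h
  · rw [min_eq_left h.le, max_eq_right h.le]
    constructor <;> intro h <;> omega
  · rw [min_eq_right (not_lt.1 h), max_eq_left (not_lt.1 h)]
    constructor <;> intro h <;> omega

theorem sum_adm {n : ℕ} (T : NTree (n+1)) (k : Fin (n+1) → ℤ) :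
    (-1) ^ invCount T k * treeSign T * ∑ l ∈ admSet T k, bdet (sh l) = bdet (sh k) := by
  have h1 : ∑ l ∈ admSet T k, bdet (sh l) = Matrix.det (Matrix.of fun i j : Fin n =>
      ∑ y ∈ Finset.Ico
        (min (sh k (T.edge i).1) (sh k (T.edge i).2) - ((i.1 : ℤ) + 1))
        (max (sh k (T.edge i).1) (sh k (T.edge i).2) - ((i.1 : ℤ) + 1)),
        Ring.choose (y + ((i.1 : ℤ) + 1)) j.1) := by
    have := MultilinearMap.map_sum_finset
      (Matrix.detRowAlternating (n := Fin n) (R := ℤ)).toMultilinearMap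
      (fun (i : Fin n) (y : ℤ) (j : Fin n) => Ring.choose (y + ((i.1 : ℤ) + 1)) j.1)
      (fun i : Fin n => Finset.Ico
        (min (sh k (T.edge i).1) (sh k (T.edge i).2) - ((i.1 : ℤ) + 1))
        (max (sh k (T.edge i).1) (sh k (T.edge i).2) - ((i.1 : ℤ) + 1)))
    refine Eq.trans ?_ (this.symm.trans ?_)
    · apply Finset.sum_congr rfl
      intro l _
      unfold bdet sh
      simp only [add_assoc]
      rfl
    · change Matrix.det _ = Matrix.det _
      congr 1
      ext i j
      simp [Finset.sum_apply]
  have h2 : (Matrix.of fun i j : Fin n =>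
      ∑ y ∈ Finset.Ico
        (min (sh k (T.edge i).1) (sh k (T.edge i).2) - ((i.1 : ℤ) + 1))
        (max (sh k (T.edge i).1) (sh k (T.edge i).2) - ((i.1 : ℤ) + 1)),
        Ring.choose (y + ((i.1 : ℤ) + 1)) j.1) =
      Matrix.of fun i j : Fin n =>
        (-1 : ℤ) ^ (if ¬ (sh k (T.edge i).1 < sh k (T.edge i).2) then 1 else 0) *
        (Matrix.of fun i j : Fin n => Ring.choose (sh k (T.edge i).2) (j.1 + 1) -
          Ring.choose (sh k (T.edge i).1) (j.1 + 1)) i j := by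
    ext i j
    simp only [Matrix.of_apply]
    rw [sum_choose _ _ _ (min_le_max)]
    split_ifs with h
    · rw [min_eq_left h.le, max_eq_right h.le]; ring
    · rw [min_eq_right (not_lt.1 h), max_eq_left (not_lt.1 h)]; ring
  have h3 : ∏ i : Fin n, (-1 : ℤ) ^ (if ¬ (sh k (T.edge i).1 < sh k (T.edge i).2) then 1 else 0)
      = (-1) ^ invCount T k := by
    rw [Finset.prod_pow_eq_pow_sum, ← Finset.card_filter]
    rfl
  rw [h1, h2, Matrix.det_mul_column, bdet_tree, h3]
  have h4 : ((-1 : ℤ) ^ invCount T k) * (-1) ^ invCount T k = 1 := by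
    rw [← mul_pow]; simp
  have h5 := treeSign_sq T
  linear_combination (treeSign T * treeSign T * bdet (sh k)) * h4 + bdet (sh k) * h5

/-- restriction of a tree sequence -/
def TreeSeq.restr {n : ℕ} (𝒯 : TreeSeq (n+1)) : TreeSeq n := fun i => 𝒯 i.castSucc

theorem gtSign_snoc {n : ℕ} (𝒯 : TreeSeq (n+1)) (L : ∀ i : Fin (n+1), Fin (i.1 + 1) → ℤ) :
    gtSign 𝒯 L = (-1) ^ invCount (n := n+1) (𝒯 (Fin.last n)) (L (Fin.last n)) *
      treeSign (n := n+1) (𝒯 (Fin.last n)) *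
      gtSign 𝒯.restr (fun i => L i.castSucc) := by
  unfold gtSign
  rw [Fin.sum_univ_castSucc, Fin.prod_univ_castSucc, pow_add]
  unfold TreeSeq.restr
  simp only [Fin.val_castSucc, Fin.val_last]
  ring

theorem isGT_succ {n : ℕ} (𝒯 : TreeSeq (n+2)) (k : Fin (n+2) → ℤ)
    (L : ∀ i : Fin (n+2), Fin (i.1 + 1) → ℤ) :
    IsGTTreeSeq 𝒯 k L ↔ L (Fin.last (n+1)) = k ∧
      Admissible (n := n+2) (𝒯 (Fin.last (n+1))) k (L (Fin.last n).castSucc) ∧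
      IsGTTreeSeq 𝒯.restr (L (Fin.last n).castSucc) (fun i => L i.castSucc) := by
  constructor
  · rintro ⟨h1, h2⟩
    have h3 : L (Fin.last (n+1)) = k := by
      funext j
      exact h1 (Fin.last (n+1)) rfl j
    refine ⟨h3, ?_, ?_, ?_⟩
    · have := h2 (Fin.last (n+1)) (Nat.succ_pos _)
      rw [h3] at this
      exact this
    · intro i hi j
      have : i = Fin.last n := Fin.ext (by simpa using hi)
      subst this
      rfl
    · intro i hi
      exact h2 i.castSucc hi
  · rintro ⟨h3, h4, h5, h6⟩
    refine ⟨?_, ?_⟩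
    · intro i hi j
      have : i = Fin.last (n+1) := Fin.ext (by simpa using hi)
      subst this
      rw [h3]
      rfl
    · intro i
      induction i using Fin.lastCases with
      | last =>
        intro hi
        rw [h3]
        exact h4
      | cast i =>
        intro hi
        exact h6 i hi

theorem main_aux (n : ℕ) : ∀ (𝒯 : TreeSeq (n+1)) (k : Fin (n+1) → ℤ),
    ∃ S : Finset (∀ i : Fin (n+1), Fin (i.1 + 1) → ℤ),
      (∀ L, L ∈ S ↔ IsGTTreeSeq 𝒯 k L) ∧ ∑ L ∈ S, gtSign 𝒯 L = bdet (sh k) := by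
  induction n with
  | zero =>
    intro 𝒯 k
    have key : ∀ L : (∀ i : Fin 1, Fin (i.1 + 1) → ℤ), gtSign 𝒯 L = 1 := by
      intro L
      rw [gtSign_snoc]
      have h1 : treeSign (n := 0+1) (𝒯 (Fin.last 0)) = 1 := by
        rw [← incMat_det, Matrix.det_fin_one, incMat_zero, if_pos rfl]
      rw [h1]
      have h2 : invCount (n := 0+1) (𝒯 (Fin.last 0)) (L (Fin.last 0)) = 0 := by
        unfold invCount
        rw [Finset.card_eq_zero]
        apply Finset.eq_empty_of_forall_notMem
        intro j
        exact j.elim0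
      rw [h2]
      simp [gtSign]
    refine ⟨{fun i j => k ⟨j.1, by have := j.isLt; have := i.isLt; omega⟩}, ?_, ?_⟩
    · intro L
      rw [Finset.mem_singleton]
      constructor
      · rintro rfl
        exact ⟨fun i hi j => rfl, fun i hi => by have := i.isLt; omega⟩
      · intro h
        funext i j
        exact h.1 i (by have := i.isLt; omega) j
    · rw [Finset.sum_singleton, key]
      simp [bdet]
  | succ n ih =>
    intro 𝒯 k
    choose S hS hsum using ih 𝒯.restr
    classical
    let g : (Σ _ : (Fin (n+1) → ℤ), (∀ i : Fin (n+1), Fin (i.1 + 1) → ℤ)) →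
      (∀ i : Fin (n+2), Fin (i.1 + 1) → ℤ) :=
      fun s => Fin.snoc (α := fun i : Fin (n+2) => Fin (i.1 + 1) → ℤ) s.2 k
    have g1 : ∀ s, g s (Fin.last (n+1)) = k := fun s =>
      Fin.snoc_last (α := fun i : Fin (n+2) => Fin (i.1 + 1) → ℤ) k s.2
    have g2 : ∀ s i, g s (Fin.castSucc i) = s.2 i := fun s i =>
      Fin.snoc_castSucc (α := fun i : Fin (n+2) => Fin (i.1 + 1) → ℤ) k s.2 i
    have top : ∀ l L, L ∈ S l → L (Fin.last n) = l := by
      intro l L h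
      funext j
      exact ((hS l L).1 h).1 (Fin.last n) rfl j
    refine ⟨((admSet (n := n+1) (𝒯 (Fin.last (n+1))) k).sigma S).image g, ?_, ?_⟩
    · intro L
      rw [isGT_succ, Finset.mem_image]
      constructor
      · rintro ⟨⟨l, L'⟩, hs, rfl⟩
        rw [Finset.mem_sigma] at hs
        refine ⟨g1 _, ?_, ?_⟩
        · rw [g2]
          have := (mem_admSet (n := n+1) _ _ _).1 hs.1
          rw [← top l L' hs.2] at this
          exact this
        · have h := (hS _ _).1 hs.2
          rw [g2]
          have e : (fun i : Fin (n+1) => g ⟨l, L'⟩ i.castSucc) = L' := funext fun i => g2 _ i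
          have e2 := top l L' hs.2
          rw [e]
          change IsGTTreeSeq 𝒯.restr (L' (Fin.last n)) L'
          rw [e2]
          exact h
      · rintro ⟨h1, h2, h3⟩
        refine ⟨⟨L (Fin.last n).castSucc, fun i => L i.castSucc⟩, ?_, ?_⟩
        · rw [Finset.mem_sigma]
          exact ⟨(mem_admSet (n := n+1) _ _ _).2 h2, (hS _ _).2 h3⟩
        · funext i
          induction i using Fin.lastCases with
          | last => rw [g1, h1]
          | cast i => rw [g2]
    · rw [Finset.sum_image]
      · rw [Finset.sum_sigma, ← sum_adm (n := n+1) (𝒯 (Fin.last (n+1))) k, Finset.mul_sum]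
        apply Finset.sum_congr rfl
        intro l _
        rw [← hsum, Finset.mul_sum]
        apply Finset.sum_congr rfl
        intro L' _
        rw [gtSign_snoc, g1]
        have e : (fun i : Fin (n+1) => g ⟨l, L'⟩ i.castSucc) = L' := funext fun i => g2 _ i
        rw [e]
      · rintro ⟨l, L⟩ hs ⟨l', L'⟩ hs' heq
        rw [Finset.mem_coe, Finset.mem_sigma] at hs hs'
        have e : L = L' := by
          funext i
          have := congrFun heq i.castSucc
          rw [g2, g2] at this
          exact this
        subst e
        have : l = l' := by rw [← top l L hs.2, ← top l' L hs'.2]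
        subst this
        rfl

theorem Lsum_eq (n : ℕ) (𝒯 : TreeSeq (n+1)) (k : Fin (n+1) → ℤ) : Lsum 𝒯 k = bdet (sh k) := by
  obtain ⟨S, hS, h⟩ := main_aux n 𝒯 k
  rw [← h, Lsum]
  have : {L : ∀ i : Fin (n+1), Fin (i.1 + 1) → ℤ | IsGTTreeSeq 𝒯 k L} = (S : Set _) := by
    ext L
    rw [Finset.mem_coe, hS]
    rfl
  rw [this, finsum_mem_coe_finset]

/-- Independency: the signed enumeration of Gelfand-Tsetlin tree sequences does not
depend on the underlying tree sequence. -/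
theorem gt_tree_sequence_independency (n : ℕ) (hn : 1 ≤ n)
    (𝒯 𝒯' : TreeSeq n) (k : Fin n → ℤ) :
    Lsum 𝒯 k = Lsum 𝒯' k := by
  obtain ⟨m, rfl⟩ : ∃ m, n = m + 1 := ⟨n - 1, by omega⟩
  rw [Lsum_eq, Lsum_eq]
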